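/- arXiv:1705.10905 — 2 statements merged into one kernel-verified Lean document; each statement's English description precedes it below -/
import Mathlib

section
/- Let f ∈ Z[X] with f not equal to 0, 1, or -1, and let A = Z[X]/(f). Let M be a finitely generated A-module which has no Z-torsion. Then Ext^1_A(M, A) = 0. -/
open CategoryTheory Polynomial

theorem aux_jac : IsJacobsonRing ℤ := by
  rw [isJacobsonRing_iff_prime_eq]
  intro P hP
  by_cases h : P = ⊥
  · subst h
    rw [eq_bot_iff]
    intro x hx
    rw [Ideal.mem_jacobson_bot] at hx
    have h1 := Int.isUnit_iff.mp (hx x)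
    have : x = 0 := by
      rcases h1 with h1 | h1
      · simpa using h1
      · nlinarith [mul_self_nonneg x]
    simpa using this
  · have := hP.isMaximal h
    exact Ideal.jacobson_eq_self_of_isMaximal

theorem aux_finhom (N : Type*) [AddCommGroup N] [Module ℤ[X] N] [Module.Finite ℤ[X] N] :
    Module.Finite ℤ[X] (N →ₗ[ℤ[X]] N) := by
  obtain ⟨k, σ, hσ⟩ := Module.Finite.exists_fin' ℤ[X] N
  refine Module.Finite.of_injective (LinearMap.lcomp ℤ[X] N σ) ?_
  intro a b hab
  ext1 x
  obtain ⟨y, rfl⟩ := hσ x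
  exact LinearMap.congr_fun hab y

theorem aux_nak {E : Type*} [AddCommGroup E] [Module ℤ[X] E] [Module.Finite ℤ[X] E]
    (I : Submodule ℤ[X] E)
    (h : ∀ p : ℕ, p.Prime → ∀ e : E, ∃ i ∈ I, ∃ e' : E, e = i + (p : ℤ[X]) • e') : I = ⊤ := by
  by_contra hI
  obtain ⟨W, hW, hIW⟩ := (eq_top_or_exists_le_coatom I).resolve_left hI
  have hs : IsSimpleModule ℤ[X] (E ⧸ W) := isSimpleModule_iff_isCoatom.mpr hW
  obtain ⟨m, hm, ⟨e⟩⟩ := isSimpleModule_iff_quot_maximal.mp hs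
  have := aux_jac
  have hmax : (m.comap (C : ℤ →+* ℤ[X])).IsMaximal :=
    Polynomial.isMaximal_comap_C_of_isJacobsonRing m
  have hp : ∃ p : ℕ, p.Prime ∧ (p : ℤ[X]) ∈ m := by
    have hne : m.comap (C : ℤ →+* ℤ[X]) ≠ ⊥ := by
      intro hb
      rw [hb] at hmax
      exact Int.not_isField (Ring.isField_iff_maximal_bot.mpr hmax)
    have hpr := hmax.isPrime
    obtain ⟨g, hg⟩ := (IsPrincipalIdealRing.principal (m.comap (C : ℤ →+* ℤ[X]))).principal
    change _ = Ideal.span {g} at hg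
    have hg0 : g ≠ 0 := by
      rintro rfl
      exact hne (by simpa using hg)
    have hgp : Prime g := by
      rw [hg] at hpr
      exact (Ideal.span_singleton_prime hg0).mp hpr
    refine ⟨g.natAbs, Int.prime_iff_natAbs_prime.mp hgp, ?_⟩
    have h1 : ((g.natAbs : ℕ) : ℤ) ∈ m.comap (C : ℤ →+* ℤ[X]) := by
      rw [hg, Ideal.mem_span_singleton]
      exact Int.dvd_natAbs_self
    have h2 := Ideal.mem_comap.mp h1
    rwa [map_natCast] at h2
  obtain ⟨p, hp, hpm⟩ := hp
  apply hW.1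
  rw [eq_top_iff]
  intro x _
  obtain ⟨i, hi, e', rfl⟩ := h p hp x
  refine W.add_mem (hIW hi) ?_
  rw [← Submodule.Quotient.mk_eq_zero, Submodule.Quotient.mk_smul]
  apply e.injective
  rw [map_smul, map_zero]
  obtain ⟨y, hy⟩ := Ideal.Quotient.mk_surjective (e (Submodule.Quotient.mk e'))
  rw [← hy]
  change Ideal.Quotient.mk m ((p : ℤ[X]) * y) = 0
  exact Ideal.Quotient.eq_zero_iff_mem.mpr (m.mul_mem_right _ hpm)

/-- reduction mod p -/
noncomputable def auxRed (p n : ℕ) :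
    (Fin n → ℤ[X]) →ₛₗ[Polynomial.mapRingHom (Int.castRingHom (ZMod p))] (Fin n → (ZMod p)[X]) where
  toFun b := fun i => Polynomial.mapRingHom (Int.castRingHom (ZMod p)) (b i)
  map_add' a b := by ext1 i; simp
  map_smul' a b := by ext1 i; simp

theorem auxRed_surj (p n : ℕ) : Function.Surjective (auxRed p n) := by
  intro y
  choose x hx using fun i => Polynomial.map_surjective (Int.castRingHom (ZMod p))
    (ZMod.ringHom_surjective _) (y i)
  exact ⟨x, funext hx⟩

theorem auxRed_eq_zero (p n : ℕ) (b : Fin n → ℤ[X]) (h : auxRed p n b = 0) :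
    ∃ c : Fin n → ℤ[X], b = (p : ℤ[X]) • c := by
  have : ∀ i, ∃ c : ℤ[X], b i = (p : ℤ[X]) * c := by
    intro i
    have h1 : Polynomial.map (Int.castRingHom (ZMod p)) (b i) = 0 := congrFun h i
    have h2 : C (p : ℤ) ∣ b i := by
      rw [Polynomial.C_dvd_iff_dvd_coeff]
      intro j
      have := congrArg (fun q => q.coeff j) h1
      simp only [coeff_map, coeff_zero, eq_intCast] at this
      exact (ZMod.intCast_zmod_eq_zero_iff_dvd _ p).mp (by simpa using this)
    simpa [Dvd.dvd] using h2
  choose c hc using this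
  exact ⟨c, funext hc⟩

theorem auxRed_p (p n : ℕ) (c : Fin n → ℤ[X]) : auxRed p n ((p : ℤ[X]) • c) = 0 := by
  rw [LinearMap.map_smulₛₗ]
  simp

instance auxSurj (p : ℕ) :
    RingHomSurjective (Polynomial.mapRingHom (Int.castRingHom (ZMod p))) :=
  ⟨Polynomial.map_surjective _ (ZMod.ringHom_surjective _)⟩

theorem aux_retract {n m : ℕ} (L : Submodule ℤ[X] (Fin n → ℤ[X])) (p : ℕ) (hp : p.Prime)
    (hL : ∀ b, (p : ℤ[X]) • b ∈ L → b ∈ L)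
    (ρ : (Fin m → ℤ[X]) →ₗ[ℤ[X]] L) (hρ : Function.Surjective ρ) :
    ∃ t : (Fin m → ℤ[X]) →ₗ[ℤ[X]] (LinearMap.ker ρ), ∀ y : LinearMap.ker ρ,
      ∃ z : LinearMap.ker ρ, t y = y + (p : ℤ[X]) • z := by
  have : Fact p.Prime := ⟨hp⟩
  have hp0 : (p : ℤ[X]) ≠ 0 := by exact_mod_cast hp.ne_zero
  let Lb : Submodule (ZMod p)[X] (Fin n → (ZMod p)[X]) := L.map (auxRed p n)
  have hfree : Module.Free (ZMod p)[X] Lb := inferInstance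
  let q : L → Lb := fun l => ⟨auxRed p n l, Submodule.mem_map_of_mem l.2⟩
  let ρb : (Fin m → (ZMod p)[X]) →ₗ[(ZMod p)[X]] Lb :=
    Fintype.linearCombination (ZMod p)[X] (fun i => q (ρ (Pi.single i 1)))
  have hcomm : ∀ y, ρb (auxRed p m y) = q (ρ y) := by
    intro y
    apply Subtype.ext
    have hy : y = ∑ i, y i • (Pi.single i 1 : Fin m → ℤ[X]) := by
      simpa using (pi_eq_sum_univ' y)
    conv_rhs => rw [hy]
    simp only [ρb, q, Fintype.linearCombination_apply, map_sum, map_smul, Submodule.coe_sum,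
      Submodule.coe_smul, LinearMap.map_smulₛₗ]
    rfl
  have hρb : Function.Surjective ρb := by
    rintro ⟨_, l, hl, rfl⟩
    obtain ⟨y, hy⟩ := hρ ⟨l, hl⟩
    refine ⟨auxRed p m y, ?_⟩
    rw [hcomm, hy]
  obtain ⟨s, hs⟩ := ρb.exists_rightInverse_of_surjective (LinearMap.range_eq_top.mpr hρb)
  have hs' : ∀ x, ρb (s x) = x := fun x => LinearMap.congr_fun hs x
  -- lifting kernel elements
  have hker : ∀ x, ρb x = 0 → ∃ y : LinearMap.ker ρ, auxRed p m y = x := by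
    intro x hx
    obtain ⟨y, rfl⟩ := auxRed_surj p m x
    rw [hcomm] at hx
    obtain ⟨c, hc⟩ := auxRed_eq_zero p n _ (congrArg Subtype.val hx)
    have hcL : c ∈ L := hL c (hc ▸ (ρ y).2)
    obtain ⟨y', hy'⟩ := hρ ⟨c, hcL⟩
    refine ⟨⟨y - (p : ℤ[X]) • y', ?_⟩, ?_⟩
    · rw [LinearMap.mem_ker, map_sub, map_smul, hy']
      apply Subtype.ext
      simp [hc]
    · change auxRed p m (y - (p : ℤ[X]) • y') = _
      rw [map_sub, auxRed_p, sub_zero]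
  have hN : ∀ i : Fin m, ∃ y : LinearMap.ker ρ,
      auxRed p m y = Pi.single i 1 - s (ρb (Pi.single i 1)) := by
    intro i
    apply hker
    rw [map_sub, hs', sub_self]
  choose ν hν using hN
  let t : (Fin m → ℤ[X]) →ₗ[ℤ[X]] (LinearMap.ker ρ) := Fintype.linearCombination ℤ[X] ν
  have ht : ∀ y, auxRed p m (t y) = auxRed p m y - s (ρb (auxRed p m y)) := by
    intro y
    have hy : auxRed p m y = ∑ i, (auxRed p m y) i • (Pi.single i 1 : Fin m → (ZMod p)[X]) := by
      simpa using (pi_eq_sum_univ' (auxRed p m y))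
    have h1 : auxRed p m (t y) = ∑ i, (auxRed p m y) i •
        (Pi.single i 1 - s (ρb (Pi.single i 1)) : Fin m → (ZMod p)[X]) := by
      simp only [t, Fintype.linearCombination_apply, map_sum, Submodule.coe_sum,
        Submodule.coe_smul, LinearMap.map_smulₛₗ, hν]
      rfl
    rw [h1]
    conv_rhs => rw [hy]
    simp only [map_sum, map_smul, smul_sub, Finset.sum_sub_distrib]
  refine ⟨t, fun y => ?_⟩
  have h2 : auxRed p m ((t y : Fin m → ℤ[X]) - y) = 0 := by
    rw [map_sub, ht, hcomm, LinearMap.mem_ker.mp y.2]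
    have : q 0 = 0 := by
      apply Subtype.ext
      simp [q]
    simp [this]
  obtain ⟨c, hc⟩ := auxRed_eq_zero p m _ h2
  have hcN : c ∈ LinearMap.ker ρ := by
    have h3 : (p : ℤ[X]) • ρ c = 0 := by
      rw [← map_smul, ← hc, map_sub, LinearMap.mem_ker.mp y.2, LinearMap.mem_ker.mp (t y).2,
        sub_zero]
    exact (smul_eq_zero.mp h3).resolve_left hp0
  refine ⟨⟨c, hcN⟩, Subtype.ext ?_⟩
  simp [← hc]

theorem aux_proj {n : ℕ} (L : Submodule ℤ[X] (Fin n → ℤ[X]))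
    (hL : ∀ p : ℕ, p.Prime → ∀ b, (p : ℤ[X]) • b ∈ L → b ∈ L) : Module.Projective ℤ[X] L := by
  obtain ⟨m, ρ, hρ⟩ := Module.Finite.exists_fin' ℤ[X] L
  let N := LinearMap.ker ρ
  let T : ((Fin m → ℤ[X]) →ₗ[ℤ[X]] N) →ₗ[ℤ[X]] (N →ₗ[ℤ[X]] N) :=
    LinearMap.lcomp ℤ[X] N N.subtype
  have hT : LinearMap.range T = ⊤ := by
    have := aux_finhom N
    refine aux_nak (E := N →ₗ[ℤ[X]] N) (LinearMap.range T) ?_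
    intro p hp e
    obtain ⟨t, ht⟩ := aux_retract L p hp (hL p hp) ρ hρ
    have hp0 : (p : ℤ[X]) ≠ 0 := by exact_mod_cast hp.ne_zero
    choose z hz using ht
    let u : N →ₗ[ℤ[X]] N :=
      { toFun := z
        map_add' := fun a b => by
          have h1 := hz (a + b)
          have h2 : t ((a + b : N) : Fin m → ℤ[X]) = t a + t b := by simp
          rw [h2, hz a, hz b] at h1
          apply smul_right_injective N hp0
          simp only [smul_add]
          rw [add_add_add_comm] at h1
          exact (add_left_cancel h1).symm
        map_smul' := fun r a => by
          have h1 := hz (r • a)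
          have h2 : t ((r • a : N) : Fin m → ℤ[X]) = r • t a := by simp
          rw [h2, hz a, smul_add] at h1
          apply smul_right_injective N hp0
          simp only [RingHom.id_apply]
          rw [smul_comm _ r]
          exact (add_left_cancel h1).symm }
    refine ⟨T (e ∘ₗ t), ⟨_, rfl⟩, -(e ∘ₗ u), ?_⟩
    ext1 y
    have h3 : T (e ∘ₗ t) y = e (y + (p : ℤ[X]) • u y) := congrArg e (hz y)
    rw [LinearMap.add_apply, h3]
    simp
  obtain ⟨r, hr⟩ := LinearMap.range_eq_top.mp hT LinearMap.id
  have hr' : ∀ y : N, r y = y := fun y => LinearMap.congr_fun hr y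
  -- section
  have hex : Function.Exact N.subtype ρ := by
    rw [LinearMap.exact_iff]; simp [N]
  have htfae := (hex.split_tfae (Submodule.injective_subtype N) hρ).out 1 0
  obtain ⟨l, hl⟩ := htfae.mp ⟨r, LinearMap.ext hr'⟩
  exact Module.Projective.of_split l ρ hl

theorem aux_ext {f : ℤ[X]} (hf0 : f ≠ 0) {n : ℕ}
    (K : Submodule (ℤ[X] ⧸ Ideal.span {f}) (Fin n → ℤ[X] ⧸ Ideal.span {f}))
    (hK : ∀ p : ℕ, p.Prime → ∀ b, p • b ∈ K → b ∈ K)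
    (φ : K →ₗ[ℤ[X] ⧸ Ideal.span {f}] (ℤ[X] ⧸ Ideal.span {f})) :
    ∃ θ : (Fin n → ℤ[X] ⧸ Ideal.span {f}) →ₗ[ℤ[X] ⧸ Ideal.span {f}] (ℤ[X] ⧸ Ideal.span {f}),
      ∀ k : K, θ k = φ k := by
  let A := ℤ[X] ⧸ Ideal.span {f}
  let red : (Fin n → ℤ[X]) →ₗ[ℤ[X]] (Fin n → A) := (Algebra.linearMap ℤ[X] A).compLeft (Fin n)
  let L : Submodule ℤ[X] (Fin n → ℤ[X]) := (K.restrictScalars ℤ[X]).comap red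
  have hproj : Module.Projective ℤ[X] L := by
    apply aux_proj
    intro p hp b hb
    apply hK p hp
    have : red ((p : ℤ[X]) • b) = p • red b := by
      rw [map_smul, Nat.cast_smul_eq_nsmul]
    rw [← this]
    exact hb
  let φ' : L →ₗ[ℤ[X]] A :=
    (φ.restrictScalars ℤ[X]) ∘ₗ (red.restrict (p := L) (q := K.restrictScalars ℤ[X]) fun _ h => h)
  have hφ' : ∀ l : L, φ' l = φ ⟨red l, l.2⟩ := fun l => rfl
  obtain ⟨ψ, hψ⟩ := Module.projective_lifting_property (Algebra.linearMap ℤ[X] A) φ'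
    Ideal.Quotient.mk_surjective
  have hψ' : ∀ l, (Ideal.Quotient.mk (Ideal.span {f}) (ψ l)) = φ' l := fun l =>
    LinearMap.congr_fun hψ l
  have hmk : ∀ b, red (f • b) = 0 := by
    intro b
    ext1 i
    change Ideal.Quotient.mk (Ideal.span {f}) (f * b i) = 0
    exact Ideal.Quotient.eq_zero_iff_mem.mpr (Ideal.mul_mem_right _ _ (Ideal.mem_span_singleton_self f))
  have hfL : ∀ b, f • b ∈ L := by
    intro b
    change red (f • b) ∈ K
    rw [hmk]; exact K.zero_mem
  have hdiv : ∀ b, ∃ c, ψ ⟨f • b, hfL b⟩ = f * c := by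
    intro b
    have h1 : Ideal.Quotient.mk (Ideal.span {f}) (ψ ⟨f • b, hfL b⟩) = 0 := by
      rw [hψ', hφ']
      have : (⟨red (f • b), hfL b⟩ : K) = 0 := Subtype.ext (hmk b)
      exact (congrArg φ this).trans (map_zero φ)
    exact Ideal.mem_span_singleton.mp (Ideal.Quotient.eq_zero_iff_mem.mp h1)
  choose c hc using hdiv
  have hcL : ∀ l : L, c l = ψ l := by
    intro l
    apply mul_left_cancel₀ hf0
    rw [← hc, ← smul_eq_mul, ← map_smul]
    rfl
  have hadd : ∀ a b, c (a + b) = c a + c b := by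
    intro a b
    apply mul_left_cancel₀ hf0
    rw [mul_add, ← hc, ← hc, ← hc, ← map_add]
    congr 1
    exact Subtype.ext (smul_add _ _ _)
  have hsmul : ∀ (r : ℤ[X]) b, c (r • b) = r * c b := by
    intro r b
    apply mul_left_cancel₀ hf0
    rw [mul_left_comm, ← hc, ← hc, ← smul_eq_mul r, ← map_smul]
    congr 1
    exact Subtype.ext (smul_comm _ _ _)
  let cl : (Fin n → ℤ[X]) →ₗ[ℤ[X]] ℤ[X] := ⟨⟨c, hadd⟩, hsmul⟩
  let θ : (Fin n → A) →ₗ[A] A :=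
    Fintype.linearCombination A (fun i => Ideal.Quotient.mk (Ideal.span {f}) (c (Pi.single i 1)))
  refine ⟨θ, fun k => ?_⟩
  choose b hb using fun i => Ideal.Quotient.mk_surjective ((k : Fin n → A) i)
  have hbk : red b = k := funext hb
  have hθ : θ (red b) = Ideal.Quotient.mk (Ideal.span {f}) (cl b) := by
    have hy : b = ∑ i, b i • (Pi.single i 1 : Fin n → ℤ[X]) := by
      simpa using (pi_eq_sum_univ' b)
    conv_rhs => rw [hy]
    simp only [θ, Fintype.linearCombination_apply, map_sum, map_smul, smul_eq_mul, map_mul]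
    rfl
  have hbL : b ∈ L := by
    change red b ∈ K
    rw [hbk]; exact k.2
  rw [← hbk, hθ]
  change Ideal.Quotient.mk (Ideal.span {f}) (c ((⟨b, hbL⟩ : L) : Fin n → ℤ[X])) = _
  rw [hcL, hψ', hφ']
  exact congrArg φ (Subtype.ext hbk)

theorem aux_main (f : Polynomial ℤ) (hf0 : f ≠ 0)
    (M : Type) [AddCommGroup M]
    [Module (Polynomial ℤ ⧸ Ideal.span {f}) M]
    (hfg : Module.Finite (Polynomial ℤ ⧸ Ideal.span {f}) M)
    (htf : ∀ (c : ℤ), c ≠ 0 → ∀ m : M, c • m = 0 → m = 0)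
    {P : Type} [AddCommGroup P] [Module (Polynomial ℤ ⧸ Ideal.span {f}) P]
    [Module.Projective (Polynomial ℤ ⧸ Ideal.span {f}) P]
    (π : P →ₗ[Polynomial ℤ ⧸ Ideal.span {f}] M) (hπ : Function.Surjective π)
    (φ : LinearMap.ker π →ₗ[Polynomial ℤ ⧸ Ideal.span {f}] (Polynomial ℤ ⧸ Ideal.span {f})) :
    ∃ θ : P →ₗ[Polynomial ℤ ⧸ Ideal.span {f}] (Polynomial ℤ ⧸ Ideal.span {f}),
      ∀ k : LinearMap.ker π, θ k = φ k := by
  obtain ⟨n, τ, hτ⟩ := Module.Finite.exists_fin' (Polynomial ℤ ⧸ Ideal.span {f}) M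
  obtain ⟨a, ha⟩ := Module.projective_lifting_property τ π hτ
  obtain ⟨b, hb⟩ := Module.projective_lifting_property π τ hπ
  have ha' : ∀ x, τ (a x) = π x := fun x => LinearMap.congr_fun ha x
  have hb' : ∀ x, π (b x) = τ x := fun x => LinearMap.congr_fun hb x
  have hbK : ∀ x ∈ LinearMap.ker τ, b x ∈ LinearMap.ker π := fun x hx => by
    rw [LinearMap.mem_ker, hb']; exact hx
  obtain ⟨θ, hθ⟩ := aux_ext hf0 (LinearMap.ker τ) (by
    intro p hp x hx
    rw [LinearMap.mem_ker, map_nsmul] at hx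
    exact htf p (by exact_mod_cast hp.ne_zero) _ (by rwa [natCast_zsmul])) (φ ∘ₗ b.restrict hbK)
  let d : P →ₗ[Polynomial ℤ ⧸ Ideal.span {f}] LinearMap.ker π :=
    (b ∘ₗ a - LinearMap.id).codRestrict _ (fun x => by
      rw [LinearMap.mem_ker]
      simp [hb', ha'])
  refine ⟨θ ∘ₗ a - φ ∘ₗ d, fun k => ?_⟩
  have hak : a k ∈ LinearMap.ker τ := by
    rw [LinearMap.mem_ker, ha']; exact k.2
  have h1 : θ (a k) = φ ⟨b (a k), hbK _ hak⟩ := hθ ⟨a k, hak⟩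
  rw [LinearMap.sub_apply, LinearMap.comp_apply, LinearMap.comp_apply, h1, ← map_sub]
  congr 1
  apply Subtype.ext
  simp [d]

/-- If `A = ℤ[X]/(f)` with `f ∉ {0, 1, -1}` and `M` is a finitely generated `A`-module
with no `ℤ`-torsion, then `Ext¹_A(M, A) = 0`. -/
theorem stmt_2 (f : Polynomial ℤ) (hf0 : f ≠ 0) (hf1 : f ≠ 1) (hfm1 : f ≠ -1)
    (M : Type) [AddCommGroup M]
    [Module (Polynomial ℤ ⧸ Ideal.span {f}) M]
    (hfg : Module.Finite (Polynomial ℤ ⧸ Ideal.span {f}) M)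
    (htf : ∀ (c : ℤ), c ≠ 0 → ∀ m : M, c • m = 0 → m = 0) :
    Subsingleton
      (((Ext (Polynomial ℤ ⧸ Ideal.span {f}) (ModuleCat (Polynomial ℤ ⧸ Ideal.span {f})) 1).obj
          (Opposite.op (ModuleCat.of (Polynomial ℤ ⧸ Ideal.span {f}) M))).obj
        (ModuleCat.of (Polynomial ℤ ⧸ Ideal.span {f})
          (Polynomial ℤ ⧸ Ideal.span {f}))) := by
  let A := Polynomial ℤ ⧸ Ideal.span {f}
  let P := ProjectiveResolution.of (ModuleCat.of A M)
  let Y := ModuleCat.of A A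
  suffices h : Limits.IsZero (((Ext A (ModuleCat A) 1).obj
      (Opposite.op (ModuleCat.of A M))).obj Y) from ModuleCat.subsingleton_of_isZero h
  refine Limits.IsZero.of_iso ?_ (P.isoExt 1 Y)
  rw [← HomologicalComplex.exactAt_iff_isZero_homology,
    HomologicalComplex.exactAt_iff' _ 0 1 2 (by simp) (by simp), ShortComplex.moduleCat_exact_iff]
  intro (ψ : P.complex.X 1 ⟶ Y) hψ
  have hψ' : P.complex.d 2 1 ≫ ψ = 0 := hψ
  have hproj : Module.Projective A (P.complex.X 0) :=
    (IsProjective.iff_projective (P.complex.X 0)).mpr (P.projective 0)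
  let π : P.complex.X 0 →ₗ[A] M := (P.π.f 0).hom
  have hπ : Function.Surjective π := (ModuleCat.epi_iff_surjective (P.π.f 0)).mp inferInstance
  have he0 := (ShortComplex.moduleCat_exact_iff _).mp P.exact₀
  have he1 := (ShortComplex.moduleCat_exact_iff _).mp (P.exact_succ 0)
  have hd : ∀ x : P.complex.X 1, π ((P.complex.d 1 0).hom x) = 0 := fun x =>
    LinearMap.congr_fun (congrArg ModuleCat.Hom.hom P.complex_d_comp_π_f_zero) x
  let δ : P.complex.X 1 →ₗ[A] LinearMap.ker π := (P.complex.d 1 0).hom.codRestrict _ hd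
  have hδ : Function.Surjective δ := by
    rintro ⟨x, hx⟩
    obtain ⟨y, hy⟩ := he0 x hx
    exact ⟨y, Subtype.ext hy⟩
  have hk : LinearMap.ker δ ≤ LinearMap.ker ψ.hom := by
    intro x hx
    obtain ⟨y, hy⟩ := he1 x (congrArg Subtype.val hx)
    rw [LinearMap.mem_ker]
    have h2 : ψ.hom ((P.complex.d 2 1).hom y) = 0 :=
      LinearMap.congr_fun (congrArg ModuleCat.Hom.hom hψ') y
    have h3 : (P.complex.d 2 1).hom y = x := hy
    rwa [h3] at h2
  let φ : LinearMap.ker π →ₗ[A] A :=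
    ((LinearMap.ker δ).liftQ ψ.hom hk) ∘ₗ (δ.quotKerEquivOfSurjective hδ).symm.toLinearMap
  have hφ : ∀ x, φ (δ x) = ψ.hom x := by
    intro x
    have : (δ.quotKerEquivOfSurjective hδ).symm (δ x) = Submodule.Quotient.mk x := by
      rw [LinearEquiv.symm_apply_eq]; rfl
    simp only [φ, LinearMap.comp_apply, LinearEquiv.coe_coe, this]
    rfl
  obtain ⟨θ, hθ⟩ := aux_main f hf0 M hfg htf π hπ φ
  refine ⟨(ModuleCat.ofHom θ : P.complex.X 0 ⟶ Y), ?_⟩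
  change P.complex.d 1 0 ≫ (ModuleCat.ofHom θ : P.complex.X 0 ⟶ Y) = ψ
  ext x
  exact (hθ (δ x)).trans (hφ x)
end

section
/- Let f ∈ Z[X] with f ∉ {0,1,-1}, A = Z[X]/(f), and let M be a finitely generated A-module without Z-torsion. Let y be a nonzerodivisor in A and x ∈ M. Then x ∈ yM if and only if for every A-linear map φ: M → A, one has φ(x) ∈ yA. -/
open Polynomial TensorProduct

lemma flat_prod' {R : Type*} [CommRing R] {F G : Type*} [AddCommGroup F] [AddCommGroup G]
    [Module R F] [Module R G] [Module.Flat R F] [Module.Flat R G] : Module.Flat R (F × G) := by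
  rw [Module.Flat.iff_rTensor_injective']
  intro I
  rw [injective_iff_map_eq_zero]
  intro t ht
  have h1 : (LinearMap.fst R F G).lTensor I t = 0 := by
    apply Module.Flat.rTensor_preserves_injective_linearMap (M := F) I.subtype I.injective_subtype
    rw [map_zero, ← LinearMap.comp_apply, LinearMap.rTensor_comp_lTensor,
      ← LinearMap.lTensor_comp_rTensor, LinearMap.comp_apply, ht, map_zero]
  have h2 : (LinearMap.snd R F G).lTensor I t = 0 := by
    apply Module.Flat.rTensor_preserves_injective_linearMap (M := G) I.subtype I.injective_subtype
    rw [map_zero, ← LinearMap.comp_apply, LinearMap.rTensor_comp_lTensor,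
      ← LinearMap.lTensor_comp_rTensor, LinearMap.comp_apply, ht, map_zero]
  have key : (LinearMap.inl R F G).lTensor I ((LinearMap.fst R F G).lTensor I t) +
      (LinearMap.inr R F G).lTensor I ((LinearMap.snd R F G).lTensor I t) = t := by
    rw [← LinearMap.comp_apply, ← LinearMap.comp_apply, ← LinearMap.lTensor_comp,
      ← LinearMap.lTensor_comp, ← LinearMap.add_apply, ← LinearMap.lTensor_add]
    have : LinearMap.inl R F G ∘ₗ LinearMap.fst R F G + LinearMap.inr R F G ∘ₗ LinearMap.snd R F G
      = LinearMap.id := by ext <;> simp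
    rw [this]; simp
  rw [← key, h1, h2]; simp

lemma flat_of_exact {R : Type*} [CommRing R] {K P Q : Type*} [AddCommGroup K] [AddCommGroup P]
    [AddCommGroup Q] [Module R K] [Module R P] [Module R Q] [Module.Flat R P] [Module.Flat R Q]
    (i : K →ₗ[R] P) (q : P →ₗ[R] Q) (hi : Function.Injective i) (hq : Function.Surjective q)
    (H : Function.Exact i q) : Module.Flat R K := by
  rw [Module.Flat.iff_rTensor_injective']
  intro I
  have h1 := LinearMap.lTensor_injective_of_exact_of_flat q hq i hi H I
  have h2 := Module.Flat.rTensor_preserves_injective_linearMap (M := P) I.subtype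
    I.injective_subtype
  have h3 := h2.comp h1
  rw [← LinearMap.coe_comp, LinearMap.rTensor_comp_lTensor, ← LinearMap.lTensor_comp_rTensor,
    LinearMap.coe_comp] at h3
  exact h3.of_comp

section
variable {M : Type*} [AddCommGroup M] [Module ℤ[X] M]

/-- multiplication by `X` on the right factor -/
noncomputable def mX (M : Type*) [AddCommGroup M] [Module ℤ[X] M] : M →ₗ[ℤ] M :=
  (LinearMap.lsmul ℤ[X] M X).restrictScalars ℤ

noncomputable def DD (M : Type*) [AddCommGroup M] [Module ℤ[X] M] :
    ℤ[X] ⊗[ℤ] M →ₗ[ℤ[X]] ℤ[X] ⊗[ℤ] M :=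
  (X : ℤ[X]) • LinearMap.id - (mX M).baseChange ℤ[X]

noncomputable def eps (M : Type*) [AddCommGroup M] [Module ℤ[X] M] :
    ℤ[X] ⊗[ℤ] M →ₗ[ℤ[X]] M :=
  LinearMap.liftBaseChange ℤ[X] LinearMap.id

lemma DD_tmul (r : ℤ[X]) (m : M) : DD M (r ⊗ₜ m) = (X * r) ⊗ₜ m - r ⊗ₜ ((X : ℤ[X]) • m) := by
  simp [DD, mX, TensorProduct.smul_tmul']

lemma eps_tmul (r : ℤ[X]) (m : M) : eps M (r ⊗ₜ m) = r • m := by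
  simp [eps]

lemma eps_DD (t : ℤ[X] ⊗[ℤ] M) : eps M (DD M t) = 0 := by
  induction t with
  | zero => simp
  | add a b ha hb => simp [ha, hb]
  | tmul r m => rw [DD_tmul, map_sub, eps_tmul, eps_tmul, mul_comm, mul_smul, sub_self]

lemma sub_mem_range_DD (t : ℤ[X] ⊗[ℤ] M) : t - 1 ⊗ₜ eps M t ∈ LinearMap.range (DD M) := by
  induction t with
  | zero => simp
  | add a b ha hb =>
    have := add_mem ha hb
    rw [map_add, tmul_add]
    convert this using 1; abel
  | tmul r m =>
    rw [eps_tmul]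
    induction r using Polynomial.induction_on generalizing m with
    | C a =>
      have : (C a : ℤ[X]) = a • 1 := by simp
      rw [this, TensorProduct.smul_tmul, smul_assoc, one_smul, sub_self]
      exact zero_mem _
    | add p q hp hq =>
      have := add_mem (hp m) (hq m)
      rw [add_tmul, add_smul, tmul_add]
      convert this using 1; abel
    | monomial n a h =>
      have h1 := h ((X : ℤ[X]) • m)
      have h2 : DD M ((C a * X ^ n) ⊗ₜ m) ∈ LinearMap.range (DD M) := ⟨_, rfl⟩
      have := add_mem h1 h2
      rw [DD_tmul] at this
      convert this using 1
      rw [smul_smul, pow_succ, ← mul_assoc, mul_comm X (C a * X^n)]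
      abel

lemma DD_inj : Function.Injective (DD M) := by
  classical
  rw [injective_iff_map_eq_zero]
  intro t ht
  let e := TensorProduct.equivFinsuppOfBasisLeft (N := M) (Polynomial.basisMonomials ℤ)
  have hc : ∀ (t : ℤ[X] ⊗[ℤ] M) (n : ℕ), e (DD M t) (n + 1) = e t n - (X : ℤ[X]) • e t (n + 1) := by
    intro t n
    induction t with
    | zero => simp
    | add a b ha hb => simp only [map_add, Finsupp.add_apply, ha, hb, smul_add]; abel
    | tmul r m =>
      rw [DD_tmul, map_sub]
      simp only [e, Finsupp.sub_apply, TensorProduct.equivFinsuppOfBasisLeft_apply_tmul_apply]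
      have hr : ∀ (p : ℤ[X]) k, (Polynomial.basisMonomials ℤ).repr p k = p.coeff k := fun _ _ => rfl
      rw [hr, hr, hr, Polynomial.coeff_X_mul, smul_comm]
  have h1 : ∀ n, e t n = (X : ℤ[X]) • e t (n + 1) := by
    intro n
    have := hc t n
    rw [ht] at this
    rw [map_zero, Finsupp.zero_apply] at this
    exact sub_eq_zero.1 this.symm
  have h2 : ∀ k n, e t n = (X : ℤ[X]) ^ k • e t (n + k) := by
    intro k
    induction k with
    | zero => simp
    | succ k ih => intro n; rw [ih n, h1 (n + k), smul_smul, pow_succ]; rfl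
  have h3 : e t = 0 := by
    ext n
    rw [h2 ((e t).support.sup id + 1) n]
    have : e t (n + ((e t).support.sup id + 1)) = 0 := by
      by_contra h
      have := Finset.le_sup (f := id) (Finsupp.mem_support_iff.2 h)
      simp only [id] at this
      omega
    rw [this]; simp
  simpa using h3

lemma flat_ker [Module.Flat ℤ M] {n : ℕ} (p : (Fin n → ℤ[X]) →ₗ[ℤ[X]] M)
    (hp : Function.Surjective p) : Module.Flat ℤ[X] (LinearMap.ker p) := by
  have hs : Function.Surjective (eps M) := fun m => ⟨1 ⊗ₜ m, by simp [eps_tmul]⟩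
  obtain ⟨s, hs'⟩ := Module.projective_lifting_property (eps M) p hs
  have hs'' : ∀ a, eps M (s a) = p a := fun a => LinearMap.congr_fun hs' a
  have hex : ∀ t, eps M t = 0 → ∃ u, DD M u = t := by
    intro t h
    have := sub_mem_range_DD t
    rw [h] at this
    simpa using this
  let q : (Fin n → ℤ[X]) × (ℤ[X] ⊗[ℤ] M) →ₗ[ℤ[X]] ℤ[X] ⊗[ℤ] M := s.coprod (DD M)
  have := flat_prod' (R := ℤ[X]) (F := Fin n → ℤ[X]) (G := ℤ[X] ⊗[ℤ] M)
  have hq : Function.Surjective q := by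
    intro b
    obtain ⟨a, ha⟩ := hp (eps M b)
    obtain ⟨u, hu⟩ := hex (b - s a) (by rw [map_sub, hs'', ha, sub_self])
    exact ⟨(a, u), by simp [q, hu]⟩
  have : Module.Flat ℤ[X] (LinearMap.ker q) :=
    flat_of_exact (LinearMap.ker q).subtype q (LinearMap.ker q).injective_subtype hq
      (LinearMap.exact_subtype_ker_map q)
  let j : LinearMap.ker q →ₗ[ℤ[X]] LinearMap.ker p :=
    LinearMap.codRestrict _ (LinearMap.fst _ _ _ ∘ₗ (LinearMap.ker q).subtype) (by
      rintro ⟨⟨a, u⟩, h⟩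
      have h : s a + DD M u = 0 := by simpa [q] using h
      have := congrArg (eps M) h
      rw [map_add, eps_DD, hs'', add_zero, map_zero] at this
      simpa using this)
  refine Module.Flat.of_linearEquiv (LinearEquiv.ofBijective j ⟨?_, ?_⟩).symm
  · rw [injective_iff_map_eq_zero]
    rintro ⟨⟨a, u⟩, h⟩ h0
    have h : s a + DD M u = 0 := by simpa [q] using h
    have h0 : a = 0 := congrArg Subtype.val h0
    subst h0
    have : u = 0 := DD_inj (by simpa using h)
    subst this; rfl
  · rintro ⟨a, ha⟩
    obtain ⟨u, hu⟩ := hex (- s a) (by rw [map_neg, hs'', LinearMap.mem_ker.1 ha, neg_zero])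
    exact ⟨⟨(a, u), by simp [q, hu]⟩, rfl⟩

end

lemma mem_smul_of_dual {R K : Type*} [CommRing R] [AddCommGroup K] [Module R K]
    [Module.Projective R K] (J : Ideal R) (u : K) (h : ∀ φ : K →ₗ[R] R, φ u ∈ J) :
    u ∈ J • (⊤ : Submodule R K) := by
  obtain ⟨s, hs⟩ := Module.Projective.out (R := R) (P := K)
  rw [← hs u, Finsupp.linearCombination_apply]
  exact Submodule.sum_mem _ fun k _ => Submodule.smul_mem_smul (h (Finsupp.lapply k ∘ₗ s)) trivial

/-- For `A = ℤ[X]/(f)`, `M` a f.g. `A`-module with no `ℤ`-torsion, `y ∈ A` a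
nonzerodivisor and `x ∈ M`: `x ∈ yM` iff `φ(x) ∈ yA` for every `A`-linear `φ : M → A`. -/
theorem stmt_3 (f : Polynomial ℤ) (hf0 : f ≠ 0) (hf1 : f ≠ 1) (hfm1 : f ≠ -1)
    (M : Type) [AddCommGroup M]
    [Module (Polynomial ℤ ⧸ Ideal.span {f}) M]
    (hfg : Module.Finite (Polynomial ℤ ⧸ Ideal.span {f}) M)
    (htf : ∀ (c : ℤ), c ≠ 0 → ∀ m : M, c • m = 0 → m = 0)
    (y : Polynomial ℤ ⧸ Ideal.span {f})
    (hy : ∀ a : Polynomial ℤ ⧸ Ideal.span {f}, y * a = 0 → a = 0)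
    (x : M) :
    (∃ m : M, x = y • m) ↔
      ∀ φ : M →ₗ[Polynomial ℤ ⧸ Ideal.span {f}] (Polynomial ℤ ⧸ Ideal.span {f}),
        φ x ∈ Ideal.span {y} := by
  constructor
  · rintro ⟨m, rfl⟩ φ
    rw [map_smul, smul_eq_mul]
    exact Ideal.mul_mem_right _ _ (Ideal.mem_span_singleton_self y)
  intro hφ
  let : Module ℤ[X] M := Module.compHom M (Ideal.Quotient.mk (Ideal.span {f}))
  have hsm : ∀ (r : ℤ[X]) (m : M), r • m = (Ideal.Quotient.mk (Ideal.span {f}) r) • m :=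
    fun _ _ => rfl
  have : IsScalarTower ℤ[X] (ℤ[X] ⧸ Ideal.span {f}) M := ⟨fun r a m => by
    rw [hsm, ← mul_smul]; rfl⟩
  have : Module.Finite ℤ[X] M := Module.Finite.trans (ℤ[X] ⧸ Ideal.span {f}) M
  have : Module.IsTorsionFree ℤ M := by
    refine ⟨fun c hc => ?_⟩
    have hc0 : c ≠ 0 := hc.ne_zero
    intro a b hab
    exact sub_eq_zero.1 (htf c hc0 _ (by rw [smul_sub, sub_eq_zero]; exact hab))
  obtain ⟨n, p, hp⟩ := Module.Finite.exists_fin' ℤ[X] M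
  have := flat_ker p hp
  have : Module.FinitePresentation ℤ[X] (LinearMap.ker p) :=
    Module.finitePresentation_of_finite _ _
  have : Module.Projective ℤ[X] (LinearMap.ker p) := Module.Flat.projective_of_finitePresentation
  obtain ⟨Y, rfl⟩ := Ideal.Quotient.mk_surjective y
  obtain ⟨z, rfl⟩ := hp x
  have hy' : ∀ a, f ∣ Y * a → f ∣ a := by
    intro a h
    rw [← Ideal.mem_span_singleton, ← Ideal.Quotient.eq_zero_iff_mem] at h ⊢
    exact hy _ (by rw [← map_mul, h])
  have hfK : ∀ a, f • a ∈ LinearMap.ker p := by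
    intro a
    rw [LinearMap.mem_ker, map_smul, hsm,
      Ideal.Quotient.eq_zero_iff_mem.2 (Ideal.mem_span_singleton_self f)]
    exact zero_smul (ℤ[X] ⧸ Ideal.span {f}) (p a)
  let mf : (Fin n → ℤ[X]) →ₗ[ℤ[X]] LinearMap.ker p :=
    LinearMap.codRestrict _ (LinearMap.lsmul _ _ f) hfK
  have key : mf z ∈ (Ideal.span {Y} ⊔ Ideal.span {f}) • (⊤ : Submodule ℤ[X] (LinearMap.ker p)) := by
    apply mem_smul_of_dual
    intro h
    let g : (Fin n → ℤ[X]) →ₗ[ℤ[X]] (ℤ[X] ⧸ Ideal.span {f}) :=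
      (Submodule.mkQ (Ideal.span {f})) ∘ₗ h ∘ₗ mf
    have hg : LinearMap.ker p ≤ LinearMap.ker g := by
      intro a ha
      have : mf a = f • ⟨a, ha⟩ := rfl
      rw [LinearMap.mem_ker]
      change Submodule.mkQ _ (h (mf a)) = 0
      rw [this, map_smul]
      simp only [Submodule.mkQ_apply, Submodule.Quotient.mk_eq_zero]
      exact Ideal.mul_mem_right _ _ (Ideal.mem_span_singleton_self f)
    let φ₀ : M →ₗ[ℤ[X]] (ℤ[X] ⧸ Ideal.span {f}) :=
      (LinearMap.ker p).liftQ g hg ∘ₗ (p.quotKerEquivOfSurjective hp).symm.toLinearMap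
    have hφ₀ : φ₀ (p z) = g z := by
      have : (p.quotKerEquivOfSurjective hp).symm (p z) = (LinearMap.ker p).mkQ z := by
        rw [LinearEquiv.symm_apply_eq]; rfl
      change (LinearMap.ker p).liftQ g hg ((p.quotKerEquivOfSurjective hp).symm (p z)) = _
      rw [this]; rfl
    have h1 := hφ (φ₀.extendScalarsOfSurjective Ideal.Quotient.mk_surjective)
    have h2 : g z ∈ Ideal.span {Ideal.Quotient.mk (Ideal.span {f}) Y} := hφ₀ ▸ h1
    obtain ⟨a, ha⟩ := Ideal.mem_span_singleton'.1 h2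
    obtain ⟨a, rfl⟩ := Ideal.Quotient.mk_surjective a
    have h3 : Ideal.Quotient.mk (Ideal.span {f}) (h (mf z) - a * Y) = 0 := by
      rw [map_sub, map_mul, ha]; exact sub_self _
    rw [Ideal.Quotient.eq_zero_iff_mem] at h3
    rw [← sub_add_cancel (h (mf z)) (a * Y), add_comm]
    exact Submodule.add_mem_sup (Ideal.mul_mem_left _ _ (Ideal.mem_span_singleton_self Y)) h3
  rw [Submodule.sup_smul, Submodule.mem_sup] at key
  obtain ⟨u, hu, v, hv, huv⟩ := key
  rw [Submodule.ideal_span_singleton_smul, Submodule.mem_smul_pointwise_iff_exists] at hu hv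
  obtain ⟨k, -, rfl⟩ := hu
  obtain ⟨k', -, rfl⟩ := hv
  have huv' : Y • (k : Fin n → ℤ[X]) + f • (k' : Fin n → ℤ[X]) = f • z := congrArg Subtype.val huv
  have hk : ∀ i, f ∣ k.1 i := by
    intro i
    apply hy'
    have := congrFun huv' i
    simp only [Pi.add_apply, Pi.smul_apply, smul_eq_mul] at this
    exact ⟨z i - k'.1 i, by linear_combination this⟩
  choose w hw using hk
  refine ⟨p w, ?_⟩
  rw [← hsm, ← map_smul]
  have hz : z = Y • w + k'.1 := by
    ext1 i
    have := congrFun huv' i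
    simp only [Pi.add_apply, Pi.smul_apply, smul_eq_mul] at this ⊢
    apply mul_left_cancel₀ hf0
    rw [hw i] at this
    linear_combination -this
  rw [hz, map_add, LinearMap.mem_ker.1 k'.2, add_zero]
end
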